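/- For σ > 0, Ψ ∈ ℝ^{n×d}, y ∈ ℝⁿ, with Σ = (I_d + σ⁻²ΨᵀΨ)⁻¹, μ = σ⁻²ΣΨᵀy, and K̂ = ΨΨᵀ, one has KL(N(0,I_d) ‖ N(μ,Σ)) = ½[ σ⁻² Tr(K̂) + yᵀ(σ⁻²I_n − (σ²I_n + K̂)⁻¹)y + n log σ² − log det(σ²I_n + K̂) ]. -/

import Mathlib

open Matrix Real MeasureTheory

/-- Density of the multivariate Gaussian `N(μ, S)` on `ℝ^d`. -/
noncomputable def gaussDensity {d : ℕ} (μ : Fin d → ℝ) (S : Matrix (Fin d) (Fin d) ℝ)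
    (θ : Fin d → ℝ) : ℝ :=
  (Real.sqrt ((2 * π) ^ d * S.det))⁻¹ *
    Real.exp (-(1 / 2) * ((θ - μ) ⬝ᵥ (S⁻¹ *ᵥ (θ - μ))))

section helpers
open ProbabilityTheory

lemma gpdf_integrable (f : ℝ → ℝ) (h : Integrable f (gaussianReal 0 1)) :
    Integrable (fun x => gaussianPDFReal 0 1 x * f x) := by
  rw [gaussianReal_of_var_ne_zero 0 one_ne_zero,
    integrable_withDensity_iff_integrable_smul' (measurable_gaussianPDF _ _)
      (Filter.Eventually.of_forall fun x => gaussianPDF_lt_top)] at h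
  simpa [toReal_gaussianPDF] using h

lemma gm1 : ∫ x, gaussianPDFReal 0 1 x * x = 0 := by
  have := integral_gaussianReal_eq_integral_smul (μ := 0) (v := 1) (f := fun x : ℝ => x) one_ne_zero
  rw [integral_id_gaussianReal] at this
  simpa using this.symm

lemma gm2 : ∫ x, gaussianPDFReal 0 1 x * (x * x) = 1 := by
  have := integral_gaussianReal_eq_integral_smul (μ := 0) (v := 1)
    (f := fun x : ℝ => x * x) one_ne_zero
  have h2 := variance_eq_sub (memLp_id_gaussianReal (μ := 0) (v := 1) 2)
  rw [variance_id_gaussianReal] at h2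
  simp only [id, integral_id_gaussianReal, Pi.pow_apply, pow_two] at h2
  simp only [smul_eq_mul] at this
  rw [← this]
  simpa using h2.symm

lemma gi1 : Integrable (fun x => gaussianPDFReal 0 1 x * x) :=
  gpdf_integrable _ ((memLp_id_gaussianReal (μ := 0) (v := 1) 1).integrable (by simp))

lemma gi2 : Integrable (fun x => gaussianPDFReal 0 1 x * (x * x)) := by
  apply gpdf_integrable
  have := (memLp_id_gaussianReal (μ := 0) (v := 1) 2).integrable_sq
  simpa [pow_two] using this

lemma gaussDensity_std {d : ℕ} (θ : Fin d → ℝ) :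
    gaussDensity 0 1 θ = ∏ k, gaussianPDFReal 0 1 (θ k) := by
  simp only [gaussDensity, gaussianPDFReal, Finset.prod_mul_distrib, ← Real.exp_sum]
  congr 1
  · simp only [det_one, mul_one, NNReal.coe_one, Finset.prod_const, Finset.card_univ,
      Fintype.card_fin]
    rw [inv_pow]
    congr 1
    rw [Real.sqrt_eq_iff_mul_self_eq (by positivity) (by positivity), ← mul_pow,
      Real.mul_self_sqrt (by positivity)]
  · congr 1
    simp only [sub_zero, inv_one, one_mulVec, dotProduct, Finset.mul_sum]
    apply Finset.sum_congr rfl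
    intro i _
    simp
    ring

lemma std_int0 (d : ℕ) : Integrable (fun θ : Fin d → ℝ => gaussDensity 0 1 θ) := by
  simp only [gaussDensity_std]
  exact Integrable.fintype_prod (fun _ => integrable_gaussianPDFReal 0 1)

lemma std_m0 (d : ℕ) : ∫ θ : Fin d → ℝ, gaussDensity 0 1 θ = 1 := by
  simp only [gaussDensity_std]
  rw [integral_fintype_prod_volume_eq_prod (fun _ : Fin d => gaussianPDFReal 0 1)]
  simp [integral_gaussianPDFReal_eq_one]

lemma std1_eq {d : ℕ} (i : Fin d) (θ : Fin d → ℝ) : gaussDensity 0 1 θ * θ i =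
    ∏ k, (fun k x => gaussianPDFReal 0 1 x * (if k = i then x else 1)) k (θ k) := by
  simp only [gaussDensity_std, Finset.prod_mul_distrib, Finset.prod_ite_eq', Finset.mem_univ, if_true]

lemma std_int1 {d : ℕ} (i : Fin d) :
    Integrable (fun θ : Fin d → ℝ => gaussDensity 0 1 θ * θ i) := by
  simp only [std1_eq]
  refine Integrable.fintype_prod
    (f := fun k x => gaussianPDFReal 0 1 x * (if k = i then x else 1)) (fun k => ?_)
  by_cases h : k = i
  · simpa [h] using gi1
  · simpa [h] using integrable_gaussianPDFReal 0 1

lemma std_m1 {d : ℕ} (i : Fin d) : ∫ θ : Fin d → ℝ, gaussDensity 0 1 θ * θ i = 0 := by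
  simp only [std1_eq]
  rw [integral_fintype_prod_volume_eq_prod
    (fun (k : Fin d) x => gaussianPDFReal 0 1 x * (if k = i then x else 1))]
  apply Finset.prod_eq_zero (Finset.mem_univ i)
  simpa using gm1

lemma std2_eq {d : ℕ} (i j : Fin d) (θ : Fin d → ℝ) : gaussDensity 0 1 θ * (θ i * θ j) =
    ∏ k, (fun k x => gaussianPDFReal 0 1 x *
      ((if k = i then x else 1) * (if k = j then x else 1))) k (θ k) := by
  simp only [gaussDensity_std, Finset.prod_mul_distrib, Finset.prod_ite_eq', Finset.mem_univ, if_true]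

lemma std_int2 {d : ℕ} (i j : Fin d) :
    Integrable (fun θ : Fin d → ℝ => gaussDensity 0 1 θ * (θ i * θ j)) := by
  simp only [std2_eq]
  refine Integrable.fintype_prod
    (f := fun k x => gaussianPDFReal 0 1 x *
      ((if k = i then x else 1) * (if k = j then x else 1))) (fun k => ?_)
  by_cases h : k = i <;> by_cases h' : k = j
  · simpa only [if_pos h, if_pos h'] using gi2
  · simpa only [if_pos h, if_neg h', mul_one] using gi1
  · simpa only [if_neg h, if_pos h', one_mul] using gi1
  · simpa only [if_neg h, if_neg h', mul_one] using integrable_gaussianPDFReal 0 1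

lemma std_m2 {d : ℕ} (i j : Fin d) :
    ∫ θ : Fin d → ℝ, gaussDensity 0 1 θ * (θ i * θ j) = if i = j then 1 else 0 := by
  simp only [std2_eq]
  rw [integral_fintype_prod_volume_eq_prod
    (fun (k : Fin d) x => gaussianPDFReal 0 1 x *
      ((if k = i then x else 1) * (if k = j then x else 1)))]
  split_ifs with h
  · subst h
    apply Finset.prod_eq_one
    intro k _
    by_cases h : k = i
    · simpa only [if_pos h] using gm2
    · simpa only [if_neg h, mul_one] using integral_gaussianPDFReal_eq_one 0 one_ne_zero
  · apply Finset.prod_eq_zero (Finset.mem_univ i)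
    simpa only [if_true, if_neg h, mul_one] using gm1

lemma std_quad {d : ℕ} (c : ℝ) (b : Fin d → ℝ) (B : Matrix (Fin d) (Fin d) ℝ) :
    ∫ θ : Fin d → ℝ, gaussDensity 0 1 θ * (c + b ⬝ᵥ θ + θ ⬝ᵥ (B *ᵥ θ)) = c + B.trace := by
  have e : ∀ θ : Fin d → ℝ, gaussDensity 0 1 θ * (c + b ⬝ᵥ θ + θ ⬝ᵥ (B *ᵥ θ)) =
      (c * gaussDensity 0 1 θ + ∑ i, b i * (gaussDensity 0 1 θ * θ i)) +
        ∑ i, ∑ j, B i j * (gaussDensity 0 1 θ * (θ i * θ j)) := by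
    intro θ
    simp only [mul_add, dotProduct, mulVec, Finset.mul_sum]
    congr 1
    · congr 1
      · ring
      · exact Finset.sum_congr rfl fun i _ => by ring
    · exact Finset.sum_congr rfl fun i _ => Finset.sum_congr rfl fun j _ => by ring
  simp only [e]
  have I0 := (std_int0 d).const_mul c
  have I1 : ∀ i, Integrable (fun θ : Fin d → ℝ => b i * (gaussDensity 0 1 θ * θ i)) :=
    fun i => (std_int1 i).const_mul _
  have I2 : ∀ i j, Integrable (fun θ : Fin d → ℝ => B i j * (gaussDensity 0 1 θ * (θ i * θ j))) :=
    fun i j => (std_int2 i j).const_mul _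
  have I1s := integrable_finsetSum Finset.univ (fun i _ => I1 i)
  have I2s := fun i => integrable_finsetSum Finset.univ (fun j _ => I2 i j)
  have I2ss := integrable_finsetSum Finset.univ (fun i _ => I2s i)
  have I01 : Integrable (fun θ : Fin d → ℝ => c * gaussDensity 0 1 θ +
      ∑ i, b i * (gaussDensity 0 1 θ * θ i)) := I0.add I1s
  rw [integral_add I01 I2ss, integral_add I0 I1s, integral_finsetSum _ (fun i _ => I1 i),
    integral_finsetSum _ (fun i _ => I2s i)]
  simp only [integral_finsetSum _ (fun j _ => I2 _ j), integral_const_mul, std_m0, std_m1, std_m2]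
  simp [Matrix.trace]

lemma log_ratio {d : ℕ} (μ : Fin d → ℝ) (S : Matrix (Fin d) (Fin d) ℝ) (hS : 0 < S.det)
    (θ : Fin d → ℝ) :
    Real.log (gaussDensity 0 1 θ / gaussDensity μ S θ) =
      (1 / 2 * Real.log S.det + 1 / 2 * (μ ⬝ᵥ (S⁻¹ *ᵥ μ)))
        + (-(1 / 2 : ℝ) • (S⁻¹ *ᵥ μ + μ ᵥ* S⁻¹)) ⬝ᵥ θ
        + θ ⬝ᵥ (((1 / 2 : ℝ) • (S⁻¹ - 1)) *ᵥ θ) := by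
  have hp : (0 : ℝ) < (2 * π) ^ d := by positivity
  have h1 : (√((2 * π) ^ d * S.det))⁻¹ ≠ 0 := by positivity
  have h2 : (√((2 * π) ^ d * (1 : Matrix (Fin d) (Fin d) ℝ).det))⁻¹ ≠ 0 := by
    rw [det_one]; positivity
  unfold gaussDensity
  rw [Real.log_div (mul_ne_zero h2 (Real.exp_ne_zero _)) (mul_ne_zero h1 (Real.exp_ne_zero _)), Real.log_mul h2 (Real.exp_ne_zero _),
    Real.log_mul h1 (Real.exp_ne_zero _), Real.log_inv, Real.log_inv, Real.log_exp,
    Real.log_exp, det_one, mul_one, Real.log_sqrt (by positivity), Real.log_sqrt (by positivity),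
    Real.log_mul hp.ne' hS.ne']
  simp only [sub_zero, inv_one, one_mulVec, mulVec_sub, dotProduct_sub, sub_dotProduct,
    smul_mulVec, sub_mulVec, dotProduct_smul, smul_dotProduct, add_dotProduct, smul_eq_mul,
    dotProduct_comm (S⁻¹ *ᵥ μ) θ, ← dotProduct_mulVec]
  ring

lemma woodbury {n d : ℕ} (Ψ : Matrix (Fin n) (Fin d) ℝ) (s : ℝ) (hs : s ≠ 0)
    (A : Matrix (Fin d) (Fin d) ℝ) (hA : A = 1 + s⁻¹ • (Ψᵀ * Ψ)) (hAd : IsUnit A.det)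
    (P : Matrix (Fin n) (Fin n) ℝ) (hP : P = s • 1 + Ψ * Ψᵀ) (hPd : IsUnit P.det) :
    s⁻¹ • s⁻¹ • (Ψ * A⁻¹ * Ψᵀ) = s⁻¹ • (1 : Matrix (Fin n) (Fin n) ℝ) - P⁻¹ := by
  have h1 : Ψ * A = s⁻¹ • (P * Ψ) := by
    subst hA hP
    simp [Matrix.mul_add, Matrix.add_mul, smul_smul, hs, Matrix.mul_assoc]
  have h2 : s⁻¹ • (Ψ * A⁻¹) = P⁻¹ * Ψ := by
    have : P⁻¹ * (Ψ * A) * A⁻¹ = P⁻¹ * Ψ := by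
      rw [Matrix.mul_assoc, Matrix.mul_assoc, Matrix.mul_nonsing_inv _ hAd, Matrix.mul_one]
    rw [← this, h1, Matrix.mul_smul, ← Matrix.mul_assoc, Matrix.nonsing_inv_mul _ hPd,
      Matrix.one_mul, Matrix.smul_mul]
  have h3 : Ψ * Ψᵀ = P - s • 1 := by rw [hP]; simp
  rw [← Matrix.smul_mul, h2, Matrix.mul_assoc, h3, Matrix.mul_sub, Matrix.nonsing_inv_mul _ hPd,
    smul_sub]
  simp [smul_smul, hs]

end helpers

/-- For `σ > 0`, `Ψ ∈ ℝ^{n×d}`, `y ∈ ℝⁿ`, with `Σ = (I_d + σ⁻²ΨᵀΨ)⁻¹`, `μ = σ⁻²ΣΨᵀy`,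
and `K̂ = ΨΨᵀ`, the KL divergence `KL(N(0, I_d) ‖ N(μ, Σ))` equals
`½[σ⁻² Tr(K̂) + yᵀ(σ⁻²I_n − (σ²I_n + K̂)⁻¹)y + n log σ² − log det(σ²I_n + K̂)]`. -/
theorem kl_conditional_readout_posterior (n d : ℕ) (Ψ : Matrix (Fin n) (Fin d) ℝ)
    (y : Fin n → ℝ) (σ : ℝ) (hσ : 0 < σ)
    (S : Matrix (Fin d) (Fin d) ℝ) (μ : Fin d → ℝ) (Khat : Matrix (Fin n) (Fin n) ℝ)
    (hS : S = (1 + (σ ^ 2)⁻¹ • (Ψᵀ * Ψ))⁻¹)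
    (hmu : μ = (σ ^ 2)⁻¹ • (S *ᵥ (Ψᵀ *ᵥ y)))
    (hK : Khat = Ψ * Ψᵀ) :
    ∫ θ : Fin d → ℝ,
        gaussDensity 0 1 θ * Real.log (gaussDensity 0 1 θ / gaussDensity μ S θ)
      = (1 / 2) * ((σ ^ 2)⁻¹ * Khat.trace
          + y ⬝ᵥ (((σ ^ 2)⁻¹ • (1 : Matrix (Fin n) (Fin n) ℝ)
              - ((σ ^ 2) • (1 : Matrix (Fin n) (Fin n) ℝ) + Khat)⁻¹) *ᵥ y)
          + n * Real.log (σ ^ 2)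
          - Real.log ((σ ^ 2) • (1 : Matrix (Fin n) (Fin n) ℝ) + Khat).det) := by
  set s := σ ^ 2 with hs
  have hs0 : 0 < s := by positivity
  set A : Matrix (Fin d) (Fin d) ℝ := 1 + s⁻¹ • (Ψᵀ * Ψ) with hA
  set P : Matrix (Fin n) (Fin n) ℝ := s • (1 : Matrix (Fin n) (Fin n) ℝ) + Khat with hP
  have hApos : 0 < A.det := by
    apply PosDef.det_pos
    apply PosDef.one.add_posSemidef
    have := (posSemidef_conjTranspose_mul_self Ψ).smul (inv_nonneg.2 hs0.le)
    simpa using this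
  have hdet : P.det = s ^ n * A.det := by
    have : P = s • (1 + Ψ * (s⁻¹ • Ψᵀ)) := by
      rw [hP, hK]; simp [smul_smul, hs0.ne']
    rw [this, det_smul, det_one_add_mul_comm, hA]
    simp
  have hPpos : 0 < P.det := by rw [hdet]; positivity
  have hAu : IsUnit A.det := hApos.ne'.isUnit
  have hSi : S⁻¹ = A := by rw [hS, nonsing_inv_nonsing_inv _ hAu]
  have hSd : S.det = A.det⁻¹ := by rw [hS, det_nonsing_inv, Ring.inverse_eq_inv']
  have hSpos : 0 < S.det := by rw [hSd]; positivity
  have hW := woodbury Ψ s hs0.ne' A hA hAu P (by rw [hP, hK]) hPpos.ne'.isUnit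
  simp only [log_ratio μ S hSpos, std_quad]
  rw [hSi, hSd, hdet, ← hW, Real.log_inv, Real.log_mul (by positivity) (by positivity),
    Real.log_pow s n]
  have hAm : A *ᵥ μ = s⁻¹ • (Ψᵀ *ᵥ y) := by
    rw [hmu, mulVec_smul, mulVec_mulVec, hS, mul_nonsing_inv _ hAu, one_mulVec]
  have hq : μ ⬝ᵥ (A *ᵥ μ) = y ⬝ᵥ ((s⁻¹ • s⁻¹ • (Ψ * A⁻¹ * Ψᵀ)) *ᵥ y) := by
    rw [hAm, hmu, hS, smul_mulVec, smul_mulVec, ← mulVec_mulVec, ← mulVec_mulVec]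
    simp only [dotProduct_smul, smul_dotProduct]
    rw [dotProduct_mulVec, vecMul_transpose, dotProduct_comm]
  have ht : ((1 / 2 : ℝ) • (A - 1)).trace = 1 / 2 * (s⁻¹ * Khat.trace) := by
    rw [hA, hK, trace_mul_comm Ψ]
    simp
  rw [hq, ht]
  ring
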